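/- Let (a_n)_{n≥0} satisfy 1 = a_0 ≥ a_1 ≥ a_2 ≥ … and a_i − 2a_{i+1} + a_{i+2} ≥ 0 for all i ≥ 0, and let μ be the unique shift-invariant measure of maximal entropy among invariant ν on {0,1}^ℕ with ν([0^n]) = a_n for all n ≥ 1 (determined by p_{ε w ε'} = p_{ε w} p_{w ε'}/p_w for w not a block of zeros together with the explicit values on cylinders [ε 0^n ε']). Then its measure-theoretic entropy is h_μ = −h(1−a_1) + Σ_{j=0}^∞ h(a_j − 2a_{j+1} + a_{j+2}), where h(x) = −x log x (with h(0) = 0). -/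

import Mathlib

open MeasureTheory Filter Topology Set
open scoped ENNReal NNReal

/-!  General definitions: Bowen topological entropy (via covers by Bowen balls),
measure-theoretic (Kolmogorov–Sinai) entropy, generic points, saturated systems,
and the specification property. -/

variable {X : Type*}

/-- The Bowen ball of center `x`, order `n`, radius `ε` (for the metric
`d_n(x,y) = max_{0 ≤ j < n} d(T^j x, T^j y)`). -/
def bowenBall [PseudoMetricSpace X] (T : X → X) (x : X) (n : ℕ) (ε : ℝ) : Set X :=
  {y | ∀ j < n, dist (T^[j] x) (T^[j] y) < ε}

/-- `H_n^s(Z,ε)`: infimum of `Σ_i exp(-s n_i)` over countable covers of `Z` by Bowen balls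
`B_{n_i}(x_i,ε)` with all `n_i ≥ n`. -/
noncomputable def bowenH [PseudoMetricSpace X] (T : X → X) (Z : Set X) (s ε : ℝ) (n : ℕ) :
    ℝ≥0∞ :=
  ⨅ (C : Set (X × ℕ)) (_ : C.Countable) (_ : ∀ p ∈ C, n ≤ p.2)
    (_ : Z ⊆ ⋃ p ∈ C, bowenBall T p.1 p.2 ε),
    ∑' p : C, ENNReal.ofReal (Real.exp (-s * ((p : X × ℕ).2 : ℝ)))

/-- `h_top(Z,ε)`: the critical exponent of `s ↦ H^s(Z,ε) = sup_n H_n^s(Z,ε)`. -/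
noncomputable def bowenEntropyRes [PseudoMetricSpace X] (T : X → X) (Z : Set X) (ε : ℝ) :
    ℝ≥0∞ :=
  sInf ((fun s : ℝ≥0 => (s : ℝ≥0∞)) '' {s : ℝ≥0 | (⨆ n, bowenH T Z (s : ℝ) ε n) = 0})

/-- Bowen topological entropy of a subset `Z`: `h_top(Z) = lim_{ε → 0} h_top(Z,ε)`
(the limit being a supremum by monotonicity in `ε`). -/
noncomputable def bowenEntropy [PseudoMetricSpace X] (T : X → X) (Z : Set X) : ℝ≥0∞ :=
  ⨆ (ε : ℝ) (_ : 0 < ε), bowenEntropyRes T Z ε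

/-- Entropy of the partition `P ∨ T⁻¹P ∨ ⋯ ∨ T⁻⁽ⁿ⁻¹⁾P`, where a countable partition is
encoded as a function `P : X → ℕ`: it is the Shannon entropy of the map
`x ↦ (P x, P (T x), …, P (Tⁿ⁻¹ x))`. -/
noncomputable def partInfo [MeasurableSpace X] (T : X → X) (μ : Measure X) (P : X → ℕ)
    (n : ℕ) : ℝ≥0∞ :=
  ∑' l : List ℕ, ENNReal.ofReal (Real.negMulLog
    ((μ ((fun x => (List.range n).map fun j => P (T^[j] x)) ⁻¹' {l})).toReal))

/-- Measure-theoretic (Kolmogorov–Sinai) entropy `h_μ(T)`: supremum over finite measurable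
partitions `P` of `lim_n (1/n) H_μ(P ∨ T⁻¹P ∨ ⋯ ∨ T⁻⁽ⁿ⁻¹⁾P)` (the limit exists by
subadditivity, so it may be written as a `liminf`). -/
noncomputable def ksEntropy [MeasurableSpace X] (T : X → X) (μ : Measure X) : ℝ≥0∞ :=
  ⨆ (P : X → ℕ) (_ : Measurable P) (_ : (Set.range P).Finite),
    Filter.atTop.liminf fun n : ℕ => partInfo T μ P n / (n : ℝ≥0∞)

/-- `x` is a generic point for `μ` : the empirical measures `(1/n) Σ_{j<n} δ_{T^j x}`
converge to `μ` in the weak-star topology, i.e. Birkhoff averages of every continuous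
function converge to its integral. -/
def IsGeneric [TopologicalSpace X] [MeasurableSpace X] (T : X → X) (μ : Measure X)
    (x : X) : Prop :=
  ∀ f : C(X, ℝ), Tendsto (fun n : ℕ => (∑ j ∈ Finset.range n, f (T^[j] x)) / (n : ℝ))
    atTop (𝓝 (∫ y, f y ∂μ))

/-- `μ ∈ V(x)` : `μ` is a weak-star limit point of the empirical measures of `x`. -/
def IsLimitMeasure [TopologicalSpace X] [MeasurableSpace X] (T : X → X) (x : X)
    (μ : Measure X) : Prop :=
  ∃ φ : ℕ → ℕ, StrictMono φ ∧ ∀ f : C(X, ℝ),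
    Tendsto (fun m : ℕ => (∑ j ∈ Finset.range (φ m), f (T^[j] x)) / (φ m : ℝ))
      atTop (𝓝 (∫ y, f y ∂μ))

/-- A system is saturated if `h_top(G_μ) = h_μ` for every invariant Borel probability
measure `μ`. -/
def Saturated [PseudoMetricSpace X] [MeasurableSpace X] (T : X → X) : Prop :=
  ∀ μ : Measure X, IsProbabilityMeasure μ → MeasurePreserving T μ μ →
    bowenEntropy T {x | IsGeneric T μ x} = ksEntropy T μ

/-- The specification property. -/
def SpecificationProperty [PseudoMetricSpace X] (T : X → X) : Prop :=
  ∀ ε : ℝ, 0 < ε → ∃ m : ℕ, 1 ≤ m ∧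
    ∀ k : ℕ, 2 ≤ k → ∀ x : ℕ → X, ∀ a b : ℕ → ℕ,
      (∀ i < k, a i ≤ b i) →
      (∀ i, i + 1 < k → b i + m ≤ a (i + 1)) →
      ∃ y : X, ∀ i < k, ∀ n ≤ b i - a i,
        dist (T^[a i + n] y) (T^[n] (x i)) < ε

/-! Symbolic dynamics on `X = {0,1}^ℕ`. -/

/-- The metric `d(x,y) = (1/2)^(first difference)` on the symbolic space `{0,1}^ℕ`. -/
noncomputable instance : MetricSpace (ℕ → Bool) := PiNat.metricSpace

/-- The shift map on `{0,1}^ℕ`. -/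
def shift : (ℕ → Bool) → ℕ → Bool := fun x n => x (n + 1)

/-- The cylinder `[w]` of all sequences beginning with the finite word `w`. -/
def cyl (w : List Bool) : Set (ℕ → Bool) :=
  {x | ∀ i : Fin w.length, x i.1 = w.get i}

/-- `R(x,[w]) = r` : the frequency of visits of the orbit of `x` to the cylinder `[w]`
exists and equals `r`. -/
def hasFreq (w : List Bool) (x : ℕ → Bool) (r : ℝ) : Prop :=
  Filter.Tendsto (fun n : ℕ =>
      (∑ j ∈ Finset.range n, (cyl w).indicator (fun _ => (1 : ℝ)) (shift^[j] x)) / (n : ℝ))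
    Filter.atTop (nhds r)

/-- The values of `μ` on the cylinders `[ε 0^n ε']` prescribed by Lemma 5.4. -/
def cylRel (a : ℕ → ℝ) (μ : Measure (ℕ → Bool)) : Prop :=
  ∀ n : ℕ,
    (μ (cyl (false :: (List.replicate n false ++ [false])))).toReal = a (n + 2) ∧
    (μ (cyl (false :: (List.replicate n false ++ [true])))).toReal
      = a (n + 1) - a (n + 2) ∧
    (μ (cyl (true :: (List.replicate n false ++ [false])))).toReal
      = a (n + 1) - a (n + 2) ∧
    (μ (cyl (true :: (List.replicate n false ++ [true])))).toReal
      = a n - 2 * a (n + 1) + a (n + 2)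

/-- The recursion relations `p_{ε w ε'} = p_{ε w} p_{w ε'} / p_w` (in multiplicative form)
for every word `w` that is not a block of zeros. -/
def markovRel (μ : Measure (ℕ → Bool)) : Prop :=
  ∀ w : List Bool, w ≠ List.replicate w.length false → ∀ e e' : Bool,
    (μ (cyl (e :: (w ++ [e'])))).toReal * (μ (cyl w)).toReal =
      (μ (cyl (e :: w))).toReal * (μ (cyl (w ++ [e']))).toReal

/-! The Kolmogorov–Sinai theorem reduces `h_μ` to the entropy rate of the coordinate partition `ξ`:
the length `n + k` itinerary of `x` determines the length `k` itinerary of each `Tʲ x`, `j < n`, so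
passing from `ξ` to another finite partition `F` costs at most `H(F | ξ ∨ ⋯ ∨ T⁻⁽ᵏ⁻¹⁾ξ)` per step,
and this tends to `0` as `k → ∞` because `ξ` generates.

For the shift, `Hₙ₊₁ - Hₙ` is the sum of `ψ(w) = p_w H(letter preceding w | w)` over the words `w`
of length `n`. The Markov relations say that, once `w` contains a `1`, appending a letter does not
change the conditional law of the letter preceding `w`; hence `ψ(w0) + ψ(w1) = ψ(w)`, and only the
words `0ⁿ` and `0ᵏ1` with `k < n` contribute. With `zₙ = p_{0ⁿ}`, `bₖ = zₖ - zₖ₊₁` and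
`cₖ = zₖ - 2zₖ₊₁ + zₖ₊₂`, one finds `ψ(0ᵏ1) = h(cₖ) + h(bₖ₊₁) - h(bₖ)`, which telescopes, while
`ψ(0ⁿ) → 0` and `bₙ → 0` because `zₙ` converges. -/

section Entropy

open Real (negMulLog)

lemma negMulLog_eq_add_mul_negMulLog_div {x y : ℝ} (h : y = 0 → x = 0) :
    negMulLog x = x / y * negMulLog y + y * negMulLog (x / y) := by
  rw [← Real.negMulLog_mul, mul_div_cancel_of_imp' h]

lemma sum_mul_negMulLog_div_le {ι : Type*} (s : Finset ι) {x y : ι → ℝ}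
    (hx : ∀ i ∈ s, 0 ≤ x i) (hy : ∀ i ∈ s, 0 ≤ y i) (hxy : ∀ i ∈ s, y i = 0 → x i = 0) :
    ∑ i ∈ s, y i * negMulLog (x i / y i) ≤
      (∑ i ∈ s, y i) * negMulLog ((∑ i ∈ s, x i) / ∑ i ∈ s, y i) := by
  rcases (Finset.sum_nonneg hy).eq_or_lt with hzero | hpos
  · have hyi := (Finset.sum_eq_zero_iff_of_nonneg hy).1 hzero.symm
    rw [← hzero, zero_mul]
    exact (Finset.sum_eq_zero fun i hi => by rw [hyi i hi, zero_mul]).le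
  · have hjensen := Real.concaveOn_negMulLog.le_map_centerMass (p := fun i => x i / y i) hy hpos
      fun i hi => div_nonneg (hx i hi) (hy i hi)
    simp only [Finset.centerMass, smul_eq_mul, Function.comp_apply] at hjensen
    rw [Finset.sum_congr rfl fun i hi => mul_div_cancel_of_imp' (hxy i hi), inv_mul_eq_div,
      inv_mul_eq_div, div_le_iff₀' hpos] at hjensen
    exact hjensen

lemma negMulLog_sum_le {ι : Type*} (s : Finset ι) {x : ι → ℝ} (hx : ∀ i ∈ s, 0 ≤ x i) :
    negMulLog (∑ i ∈ s, x i) ≤ ∑ i ∈ s, negMulLog (x i) := by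
  simp only [Real.negMulLog, neg_mul, Finset.sum_neg_distrib, neg_le_neg_iff, Finset.sum_mul]
  refine Finset.sum_le_sum fun i hi => ?_
  rcases (hx i hi).eq_or_lt with hzero | hpos
  · simp only [← hzero, zero_mul, le_refl]
  · exact mul_le_mul_of_nonneg_left
      (Real.log_le_log hpos (Finset.single_le_sum hx hi)) hpos.le

variable {Ω α β γ : Type*} [MeasurableSpace Ω]

lemma measureReal_inter_eq_zero (μ : Measure Ω) [IsFiniteMeasure μ] {B : Set Ω} (A : Set Ω)
    (hB : μ.real B = 0) : μ.real (A ∩ B) = 0 :=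
  measureReal_mono_null inter_subset_right hB

lemma sum_measureReal_inter_preimage_singleton [MeasurableSpace β] [MeasurableSingletonClass β]
    (μ : Measure Ω) [IsFiniteMeasure μ] {G : Ω → β} (hG : Measurable G) (A : Set Ω) (s : Finset β) :
    ∑ b ∈ s, μ.real (A ∩ G ⁻¹' {b}) = μ.real (A ∩ G ⁻¹' s) := by
  have hsum := sum_measureReal_preimage_singleton (μ := μ.restrict A) s
    fun b _ => hG (measurableSet_singleton b)
  simpa only [measureReal_restrict_apply (hG (measurableSet_singleton _)),
    measureReal_restrict_apply (hG s.measurableSet), inter_comm A] using hsum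

variable [Fintype α] [Fintype β]

/-- Shannon entropy of a random variable with values in a finite type. -/
noncomputable def shannonEntropy (μ : Measure Ω) (F : Ω → α) : ℝ :=
  ∑ a, negMulLog (μ.real (F ⁻¹' {a}))

/-- The contribution of the event `A` to a conditional entropy given `G`, i.e. the mean of
`negMulLog (μ(A | G))`. Null values of `G` contribute nothing, their weight being zero. -/
noncomputable def eventCondEntropy (μ : Measure Ω) (A : Set Ω) (G : Ω → β) : ℝ :=
  ∑ b, μ.real (G ⁻¹' {b}) * negMulLog (μ.real (A ∩ G ⁻¹' {b}) / μ.real (G ⁻¹' {b}))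

/-- Conditional Shannon entropy of `F` given `G`. -/
noncomputable def condEntropy (μ : Measure Ω) (F : Ω → α) (G : Ω → β) : ℝ :=
  ∑ a, eventCondEntropy μ (F ⁻¹' {a}) G

variable (μ : Measure Ω) [IsFiniteMeasure μ]

lemma eventCondEntropy_nonneg (A : Set Ω) (G : Ω → β) : 0 ≤ eventCondEntropy μ A G :=
  Finset.sum_nonneg fun _ _ => mul_nonneg measureReal_nonneg <|
    Real.negMulLog_nonneg (div_nonneg measureReal_nonneg measureReal_nonneg)
      (div_le_one_of_le₀ (measureReal_mono inter_subset_right) measureReal_nonneg)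

lemma sum_measureReal_inter_preimage_univ [MeasurableSpace β] [MeasurableSingletonClass β]
    {G : Ω → β} (hG : Measurable G) (A : Set Ω) :
    ∑ b, μ.real (A ∩ G ⁻¹' {b}) = μ.real A := by
  rw [sum_measureReal_inter_preimage_singleton μ hG, Finset.coe_univ, preimage_univ, inter_univ]

lemma measureReal_inter_comp_preimage_singleton [DecidableEq γ] [MeasurableSpace β]
    [MeasurableSingletonClass β] {G : Ω → β} (hG : Measurable G) (φ : β → γ) (A : Set Ω) (c : γ) :
    μ.real (A ∩ (φ ∘ G) ⁻¹' {c}) = ∑ b with φ b = c, μ.real (A ∩ G ⁻¹' {b}) := by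
  rw [sum_measureReal_inter_preimage_singleton μ hG, preimage_comp]
  congr 3
  ext b
  simp only [mem_preimage, mem_singleton_iff, Finset.coe_filter_univ, mem_ofPred_eq]

lemma measureReal_comp_preimage_singleton [DecidableEq γ] [MeasurableSpace β]
    [MeasurableSingletonClass β] {G : Ω → β} (hG : Measurable G) (φ : β → γ) (c : γ) :
    μ.real ((φ ∘ G) ⁻¹' {c}) = ∑ b with φ b = c, μ.real (G ⁻¹' {b}) := by
  simpa only [univ_inter] using measureReal_inter_comp_preimage_singleton μ hG φ univ c

lemma eventCondEntropy_le_comp [Fintype γ] [MeasurableSpace β] [MeasurableSingletonClass β]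
    {G : Ω → β} (hG : Measurable G) (φ : β → γ) (A : Set Ω) :
    eventCondEntropy μ A G ≤ eventCondEntropy μ A (φ ∘ G) := by
  classical
  unfold eventCondEntropy
  rw [← Finset.sum_fiberwise Finset.univ φ]
  refine Finset.sum_le_sum fun c _ => ?_
  rw [measureReal_inter_comp_preimage_singleton μ hG, measureReal_comp_preimage_singleton μ hG]
  exact sum_mul_negMulLog_div_le _ (fun _ _ => measureReal_nonneg) (fun _ _ => measureReal_nonneg)
    fun _ _ => measureReal_inter_eq_zero μ A

lemma condEntropy_le_comp [Fintype γ] [MeasurableSpace β] [MeasurableSingletonClass β]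
    (F : Ω → α) {G : Ω → β} (hG : Measurable G) (φ : β → γ) :
    condEntropy μ F G ≤ condEntropy μ F (φ ∘ G) :=
  Finset.sum_le_sum fun a _ => eventCondEntropy_le_comp μ hG φ (F ⁻¹' {a})

lemma shannonEntropy_comp_le [Fintype γ] [MeasurableSpace β] [MeasurableSingletonClass β]
    {G : Ω → β} (hG : Measurable G) (φ : β → γ) :
    shannonEntropy μ (φ ∘ G) ≤ shannonEntropy μ G := by
  classical
  unfold shannonEntropy
  rw [← Finset.sum_fiberwise Finset.univ φ]
  refine Finset.sum_le_sum fun c _ => ?_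
  rw [measureReal_comp_preimage_singleton μ hG]
  exact negMulLog_sum_le _ fun _ _ => measureReal_nonneg

lemma sum_negMulLog_measureReal_inter [MeasurableSpace α] [MeasurableSingletonClass α]
    {F : Ω → α} (hF : Measurable F) (B : Set Ω) :
    ∑ a, negMulLog (μ.real (F ⁻¹' {a} ∩ B)) = negMulLog (μ.real B) +
      ∑ a, μ.real B * negMulLog (μ.real (F ⁻¹' {a} ∩ B) / μ.real B) := by
  have hsum : ∑ a, μ.real (F ⁻¹' {a} ∩ B) = μ.real B := by
    simpa only [inter_comm B] using sum_measureReal_inter_preimage_univ μ hF B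
  have hdiv : μ.real B / μ.real B * negMulLog (μ.real B) = negMulLog (μ.real B) := by
    rcases eq_or_ne (μ.real B) 0 with hB | hB
    · rw [hB, Real.negMulLog_zero, mul_zero]
    · rw [div_self hB, one_mul]
  rw [Finset.sum_congr rfl fun a _ => negMulLog_eq_add_mul_negMulLog_div
      (measureReal_inter_eq_zero μ (F ⁻¹' {a})),
    Finset.sum_add_distrib, ← Finset.sum_mul, ← Finset.sum_div, hsum, hdiv]

lemma shannonEntropy_prodMk [MeasurableSpace α] [MeasurableSingletonClass α]
    {F : Ω → α} (hF : Measurable F) (G : Ω → β) :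
    shannonEntropy μ (fun x => (F x, G x)) = shannonEntropy μ G + condEntropy μ F G := by
  have hatom (a : α) (b : β) : (fun x => (F x, G x)) ⁻¹' {(a, b)} = F ⁻¹' {a} ∩ G ⁻¹' {b} := by
    rw [← singleton_prod_singleton, mk_preimage_prod]
  simp only [shannonEntropy, condEntropy, eventCondEntropy, Fintype.sum_prod_type, hatom]
  rw [Finset.sum_comm, Finset.sum_comm (s := (Finset.univ : Finset α)), ← Finset.sum_add_distrib]
  exact Finset.sum_congr rfl fun b _ => sum_negMulLog_measureReal_inter μ hF _

lemma shannonEntropy_tuple_prodMk_le [MeasurableSpace α] [MeasurableSingletonClass α]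
    [MeasurableSpace β] [MeasurableSingletonClass β] {n : ℕ} {F : Fin n → Ω → α}
    (hF : ∀ i, Measurable (F i)) {G : Ω → β} (hG : Measurable G) :
    shannonEntropy μ (fun x => ((fun i => F i x), G x)) ≤
      shannonEntropy μ G + ∑ i, condEntropy μ (F i) G := by
  induction n with
  | zero =>
    have hpair : (fun x => ((fun i => F i x), G x)) = (fun b => (Fin.elim0, b)) ∘ G :=
      funext fun x => Prod.ext (Subsingleton.elim _ _) rfl
    rw [hpair, Fin.sum_univ_zero, add_zero]
    exact shannonEntropy_comp_le μ hG _
  | succ n ih =>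
    set tail : Ω → (Fin n → α) × β := fun x => ((fun i => F i.succ x), G x)
    have htail : Measurable tail := (measurable_pi_lambda _ fun i : Fin n => hF i.succ).prodMk hG
    have hpair : (fun x => ((fun i => F i x), G x)) =
        (fun z : α × (Fin n → α) × β => ((Fin.cons z.1 z.2.1 : Fin (n + 1) → α), z.2.2)) ∘
          fun x => (F 0 x, tail x) :=
      funext fun x => Prod.ext (Fin.cons_self_tail fun i => F i x).symm rfl
    calc shannonEntropy μ (fun x => ((fun i => F i x), G x))
        ≤ shannonEntropy μ (fun x => (F 0 x, tail x)) :=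
          hpair ▸ shannonEntropy_comp_le μ ((hF 0).prodMk htail) _
      _ = shannonEntropy μ tail + condEntropy μ (F 0) tail :=
          shannonEntropy_prodMk μ (hF 0) tail
      _ ≤ (shannonEntropy μ G + ∑ i : Fin n, condEntropy μ (F i.succ) G) +
            condEntropy μ (F 0) G :=
          add_le_add (ih fun i : Fin n => hF i.succ) (condEntropy_le_comp μ (F 0) htail Prod.snd)
      _ = shannonEntropy μ G + ∑ i, condEntropy μ (F i) G := by
          rw [Fin.sum_univ_succ]
          ring

lemma shannonEntropy_tuple_le [MeasurableSpace α] [MeasurableSingletonClass α]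
    [MeasurableSpace β] [MeasurableSingletonClass β] {n : ℕ} {F : Fin n → Ω → α}
    (hF : ∀ i, Measurable (F i)) {G : Ω → β} (hG : Measurable G) :
    shannonEntropy μ (fun x i => F i x) ≤ shannonEntropy μ G + ∑ i, condEntropy μ (F i) G :=
  (shannonEntropy_comp_le μ ((measurable_pi_lambda _ hF).prodMk hG) Prod.fst).trans
    (shannonEntropy_tuple_prodMk_le μ hF hG)

end Entropy

section Approximation

open Real (negMulLog)

lemma exists_measureReal_symmDiff_lt_of_iSup_eq {Ω ι : Type*} [SemilatticeSup ι] [Nonempty ι]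
    {m0 : MeasurableSpace Ω} (μ : Measure Ω) [IsFiniteMeasure μ] {𝓕 : ι → MeasurableSpace Ω}
    (hmono : Monotone 𝓕) (hgen : ⨆ i, 𝓕 i = m0) {A : Set Ω} (hA : MeasurableSet A)
    {ε : ℝ} (hε : 0 < ε) :
    ∃ i S, MeasurableSet[𝓕 i] S ∧ μ.real (symmDiff S A) < ε := by
  have hring : IsSetRing (⋃ i, {S | MeasurableSet[𝓕 i] S}) := by
    refine ⟨mem_iUnion.2 ⟨Classical.arbitrary ι, @MeasurableSet.empty _ (𝓕 _)⟩, ?_, ?_⟩ <;>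
      intro S S' hS hS' <;>
      obtain ⟨i, hi⟩ := mem_iUnion.1 hS <;> obtain ⟨j, hj⟩ := mem_iUnion.1 hS'
    · exact mem_iUnion.2 ⟨i ⊔ j, (hmono le_sup_left S hi).union (hmono le_sup_right S' hj)⟩
    · exact mem_iUnion.2 ⟨i ⊔ j, (hmono le_sup_left S hi).diff (hmono le_sup_right S' hj)⟩
  obtain ⟨S, hS, hlt⟩ := exists_measure_symmDiff_lt_of_generateFrom_isSetRing (μ := μ) hring
    ⟨{univ}, countable_singleton _, singleton_subset_iff.2 <| mem_iUnion.2
      ⟨Classical.arbitrary ι, @MeasurableSet.univ _ (𝓕 _)⟩, by simp⟩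
    (hgen.symm.trans (MeasurableSpace.generateFrom_iUnion_measurableSet 𝓕).symm) hA
    (ENNReal.ofReal_pos.2 hε)
  obtain ⟨i, hi⟩ := mem_iUnion.1 hS
  exact ⟨i, S, hi, (ENNReal.lt_ofReal_iff_toReal_lt (measure_ne_top _ _)).1 hlt⟩

lemma mul_negMulLog_div_le_sub {x y : ℝ} (hx : 0 ≤ x) (hy : 0 ≤ y) (hxy : y = 0 → x = 0) :
    y * negMulLog (x / y) ≤ y - x :=
  calc y * negMulLog (x / y) ≤ y * (1 - x / y) :=
        mul_le_mul_of_nonneg_left (Real.negMulLog_le_one_sub_self (div_nonneg hx hy)) hy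
    _ = y - x := by rw [mul_sub, mul_one, mul_div_cancel_of_imp' hxy]

lemma mul_negMulLog_div_le_negMulLog {x y : ℝ} (hx : 0 ≤ x) (hy : 0 ≤ y) (hy1 : y ≤ 1)
    (hxy : y = 0 → x = 0) : y * negMulLog (x / y) ≤ negMulLog x := by
  rw [negMulLog_eq_add_mul_negMulLog_div hxy]
  exact le_add_of_nonneg_left (mul_nonneg (div_nonneg hx hy) (Real.negMulLog_nonneg hy hy1))

variable {Ω α : Type*} [m0 : MeasurableSpace Ω] (μ : Measure Ω) [IsProbabilityMeasure μ]

lemma eventCondEntropy_le_of_preimage {β : Type*} [Fintype β] [MeasurableSpace β]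
    [DiscreteMeasurableSpace β] {G : Ω → β} (hG : Measurable G) {A : Set Ω}
    (hA : MeasurableSet A) (U : Set β) :
    eventCondEntropy μ A G ≤ μ.real (G ⁻¹' U \ A) + negMulLog (μ.real (A \ G ⁻¹' U)) := by
  classical
  have htrue : ((fun b => decide (b ∈ U)) ∘ G) ⁻¹' {true} = G ⁻¹' U := by ext x; simp
  have hfalse : ((fun b => decide (b ∈ U)) ∘ G) ⁻¹' {false} = (G ⁻¹' U)ᶜ := by ext x; simp
  have hdiff : μ.real (G ⁻¹' U \ A) = μ.real (G ⁻¹' U) - μ.real (A ∩ G ⁻¹' U) := by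
    rw [inter_comm, ← measureReal_inter_add_sdiff (μ := μ) (s := G ⁻¹' U) hA, add_sub_cancel_left]
  refine (eventCondEntropy_le_comp μ hG (fun b => decide (b ∈ U)) A).trans ?_
  rw [eventCondEntropy, Fintype.sum_bool, htrue, hfalse, hdiff, sdiff_eq]
  exact add_le_add
    (mul_negMulLog_div_le_sub measureReal_nonneg measureReal_nonneg
      (measureReal_inter_eq_zero μ A))
    (mul_negMulLog_div_le_negMulLog measureReal_nonneg measureReal_nonneg measureReal_le_one
      (measureReal_inter_eq_zero μ A))

variable {β : ℕ → Type*} [∀ n, Fintype (β n)] [∀ n, MeasurableSpace (β n)]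
  [∀ n, DiscreteMeasurableSpace (β n)] {G : ∀ n, Ω → β n}

lemma tendsto_eventCondEntropy_zero
    (hmono : Monotone fun n => MeasurableSpace.comap (G n) inferInstance)
    (hgen : ⨆ n, MeasurableSpace.comap (G n) inferInstance = m0)
    {A : Set Ω} (hA : MeasurableSet A) :
    Tendsto (fun n => eventCondEntropy μ A (G n)) atTop (𝓝 0) := by
  have hG (n : ℕ) : Measurable (G n) :=
    measurable_iff_comap_le.2 (hgen ▸ le_iSup (fun n => MeasurableSpace.comap (G n) _) n)
  refine tendsto_order.2 ⟨fun c hc => Eventually.of_forall fun n =>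
    hc.trans_le (eventCondEntropy_nonneg μ A (G n)), fun ε hε => ?_⟩
  have hsmall : ∀ᶠ x in 𝓝 (0 : ℝ), negMulLog x < ε / 2 :=
    Real.continuous_negMulLog.tendsto 0 |>.eventually_lt_const
      (by rw [Real.negMulLog_zero]; exact half_pos hε)
  obtain ⟨δ, hδ, hball⟩ := Metric.eventually_nhds_iff.1 hsmall
  obtain ⟨i, S, hS, hlt⟩ := exists_measureReal_symmDiff_lt_of_iSup_eq μ hmono hgen hA
    (lt_min hδ (half_pos hε))
  filter_upwards [eventually_ge_atTop i] with n hn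
  obtain ⟨U, -, rfl⟩ := hmono hn S hS
  have hfirst : μ.real (G n ⁻¹' U \ A) < ε / 2 :=
    (measureReal_mono subset_union_left).trans_lt (hlt.trans_le (min_le_right _ _))
  have hsecond : negMulLog (μ.real (A \ G n ⁻¹' U)) < ε / 2 := by
    refine hball ?_
    rw [Real.dist_0_eq_abs, abs_of_nonneg measureReal_nonneg]
    exact (measureReal_mono subset_union_right).trans_lt (hlt.trans_le (min_le_left _ _))
  linarith [eventCondEntropy_le_of_preimage μ (hG n) hA U]

lemma tendsto_condEntropy_zero [Fintype α] [MeasurableSpace α] [MeasurableSingletonClass α]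
    (hmono : Monotone fun n => MeasurableSpace.comap (G n) inferInstance)
    (hgen : ⨆ n, MeasurableSpace.comap (G n) inferInstance = m0)
    {F : Ω → α} (hF : Measurable F) :
    Tendsto (fun n => condEntropy μ F (G n)) atTop (𝓝 0) := by
  simpa only [condEntropy, Finset.sum_const_zero] using tendsto_finsetSum Finset.univ
    fun a _ => tendsto_eventCondEntropy_zero μ hmono hgen (hF (measurableSet_singleton a))

end Approximation

section KolmogorovSinai

lemma tendsto_div_of_tendsto_succ_sub {u : ℕ → ℝ} {l : ℝ}
    (hu : Tendsto (fun n => u (n + 1) - u n) atTop (𝓝 l)) :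
    Tendsto (fun n => u n / n) atTop (𝓝 l) := by
  have hzero := tendsto_const_div_atTop_nhds_zero_nat (u 0)
  refine (add_zero l ▸ hu.cesaro.add hzero).congr fun n => ?_
  rw [Finset.sum_range_sub]
  ring

lemma tendsto_add_nat_div {u : ℕ → ℝ} {l : ℝ} (hu : Tendsto (fun n => u n / n) atTop (𝓝 l))
    (k : ℕ) : Tendsto (fun n : ℕ => u (n + k) / n) atTop (𝓝 l) := by
  have hratio : Tendsto (fun n : ℕ => 1 + (k : ℝ) / n) atTop (𝓝 (1 + 0)) :=
    (tendsto_const_div_atTop_nhds_zero_nat (k : ℝ)).const_add 1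
  have hprod := ((tendsto_add_atTop_iff_nat k).2 hu).mul hratio
  rw [add_zero, mul_one] at hprod
  refine hprod.congr' ?_
  filter_upwards [eventually_ne_atTop 0] with n hn
  rw [one_add_div (Nat.cast_ne_zero.2 hn), ← Nat.cast_add]
  exact div_mul_div_cancel₀ (Nat.cast_ne_zero.2 (by omega))

variable {Ω α κ : Type*}

/-- The `ξ`-names of the first `n` points of the orbit of `x` under `T`; its fibres are the atoms
of the refinement `ξ ∨ T⁻¹ξ ∨ ⋯ ∨ T⁻⁽ⁿ⁻¹⁾ξ`. -/
def itinerary (T : Ω → Ω) (ξ : Ω → κ) (n : ℕ) (x : Ω) : Fin n → κ := fun j => ξ (T^[j] x)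

lemma monotone_comap_itinerary [MeasurableSpace κ] (T : Ω → Ω) (ξ : Ω → κ) :
    Monotone fun n => MeasurableSpace.comap (itinerary T ξ n) inferInstance := by
  intro m n hmn
  set restrict : (Fin n → κ) → Fin m → κ := fun w i => w (Fin.castLE hmn i)
  have hrestrict : Measurable restrict := by fun_prop
  have hcomp : itinerary T ξ m = restrict ∘ itinerary T ξ n := rfl
  beta_reduce
  rw [hcomp, ← MeasurableSpace.comap_comp]
  exact MeasurableSpace.comap_mono hrestrict.comap_le

lemma map_range_eq_ofFn_itinerary (T : Ω → Ω) (ξ : Ω → κ) (v : κ → ℕ) (n : ℕ) (x : Ω) :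
    (List.range n).map (fun j => v (ξ (T^[j] x))) = List.ofFn (v ∘ itinerary T ξ n x) := by
  apply List.ext_getElem <;> simp [itinerary]

variable [MeasurableSpace Ω] {T : Ω → Ω} {μ : Measure Ω}

lemma measurable_itinerary [MeasurableSpace κ] (hT : Measurable T) {ξ : Ω → κ}
    (hξ : Measurable ξ) (n : ℕ) : Measurable (itinerary T ξ n) :=
  measurable_pi_lambda _ fun j => hξ.comp (hT.iterate j)

lemma condEntropy_comp_measurePreserving [Fintype α] [MeasurableSpace α]
    [MeasurableSingletonClass α] [Fintype κ] [MeasurableSpace κ] [MeasurableSingletonClass κ]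
    (hT : MeasurePreserving T μ μ) {F : Ω → α} (hF : Measurable F) {G : Ω → κ}
    (hG : Measurable G) : condEntropy μ (F ∘ T) (G ∘ T) = condEntropy μ F G := by
  have hpre {A : Set Ω} (hA : MeasurableSet A) : μ.real (T ⁻¹' A) = μ.real A :=
    hT.measureReal_preimage hA.nullMeasurableSet
  simp only [condEntropy, eventCondEntropy, preimage_comp, ← preimage_inter,
    hpre (hG (measurableSet_singleton _)),
    hpre ((hF (measurableSet_singleton _)).inter (hG (measurableSet_singleton _)))]

lemma shannonEntropy_itinerary_le [IsFiniteMeasure μ] [Fintype α] [MeasurableSpace α]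
    [MeasurableSingletonClass α] [Fintype κ] [MeasurableSpace κ] [MeasurableSingletonClass κ]
    (hT : MeasurePreserving T μ μ) {F : Ω → α} (hF : Measurable F) {ξ : Ω → κ}
    (hξ : Measurable ξ) (n k : ℕ) :
    shannonEntropy μ (itinerary T F n) ≤
      shannonEntropy μ (itinerary T ξ (n + k)) + n * condEntropy μ F (itinerary T ξ k) := by
  have hlong := measurable_itinerary hT.measurable hξ (n + k)
  have hstep (j : Fin n) : condEntropy μ (F ∘ T^[j]) (itinerary T ξ (n + k)) ≤
      condEntropy μ F (itinerary T ξ k) := by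
    have hwindow : (fun (w : Fin (n + k) → κ) (i : Fin k) => w ⟨i + j, by omega⟩) ∘
        itinerary T ξ (n + k) = itinerary T ξ k ∘ T^[j] := by
      funext x i
      simp only [Function.comp_apply, itinerary, Function.iterate_add_apply]
    rw [← condEntropy_comp_measurePreserving (hT.iterate j) hF
      (measurable_itinerary hT.measurable hξ k), ← hwindow]
    exact condEntropy_le_comp μ _ hlong _
  calc shannonEntropy μ (itinerary T F n)
      ≤ shannonEntropy μ (itinerary T ξ (n + k)) +
          ∑ j : Fin n, condEntropy μ (F ∘ T^[j]) (itinerary T ξ (n + k)) :=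
        shannonEntropy_tuple_le μ (fun j => hF.comp (hT.measurable.iterate j)) hlong
    _ ≤ shannonEntropy μ (itinerary T ξ (n + k)) +
          ∑ _j : Fin n, condEntropy μ F (itinerary T ξ k) :=
        add_le_add_right (Finset.sum_le_sum fun j _ => hstep j) _
    _ = _ := by rw [Finset.sum_const, Finset.card_univ, Fintype.card_fin, nsmul_eq_mul]

lemma partInfo_comp_eq_ofReal_shannonEntropy [IsZeroOrProbabilityMeasure μ] [Fintype κ]
    (T : Ω → Ω) (ξ : Ω → κ) {v : κ → ℕ} (hv : Function.Injective v) (n : ℕ) :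
    partInfo T μ (v ∘ ξ) n = ENNReal.ofReal (shannonEntropy μ (itinerary T ξ n)) := by
  set code : (Fin n → κ) → List ℕ := fun w => List.ofFn (v ∘ w)
  have hcode : Function.Injective code := List.ofFn_injective.comp hv.comp_left
  have hpre (w : Fin n → κ) :
      (fun x => code (itinerary T ξ n x)) ⁻¹' {code w} = itinerary T ξ n ⁻¹' {w} := by
    ext x
    exact hcode.eq_iff
  simp only [partInfo, Function.comp_apply, map_range_eq_ofFn_itinerary]
  rw [← hcode.tsum_eq, tsum_fintype, shannonEntropy, ENNReal.ofReal_sum_of_nonneg]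
  · exact Finset.sum_congr rfl fun w _ => by rw [← hpre w, Measure.real]
  · exact fun w _ => Real.negMulLog_nonneg measureReal_nonneg measureReal_le_one
  · refine Function.support_subset_iff'.2 fun l hl => ?_
    have hempty : (fun x => code (itinerary T ξ n x)) ⁻¹' {l} = ∅ :=
      preimage_singleton_eq_empty.2 fun ⟨x, hx⟩ => hl ⟨_, hx⟩
    rw [hempty, measure_empty, ENNReal.toReal_zero, Real.negMulLog_zero, ENNReal.ofReal_zero]

lemma liminf_partInfo_comp_div_eq [IsZeroOrProbabilityMeasure μ] [Fintype κ] (T : Ω → Ω)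
    (ξ : Ω → κ) {v : κ → ℕ} (hv : Function.Injective v) :
    atTop.liminf (fun n : ℕ => partInfo T μ (v ∘ ξ) n / (n : ℝ≥0∞)) =
      atTop.liminf fun n : ℕ => ENNReal.ofReal (shannonEntropy μ (itinerary T ξ n) / n) := by
  refine liminf_congr ?_
  filter_upwards [eventually_gt_atTop 0] with n hn
  rw [partInfo_comp_eq_ofReal_shannonEntropy T ξ hv, ENNReal.ofReal_div_of_pos (Nat.cast_pos.2 hn),
    ENNReal.ofReal_natCast]

variable [IsProbabilityMeasure μ] [Fintype κ] [MeasurableSpace κ] [MeasurableSingletonClass κ]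
  {ξ : Ω → κ} {h : ℝ}

lemma liminf_shannonEntropy_itinerary_div_le [Fintype α] [MeasurableSpace α]
    [MeasurableSingletonClass α] (hT : MeasurePreserving T μ μ) (hξ : Measurable ξ)
    (hgen : ⨆ n, MeasurableSpace.comap (itinerary T ξ n) inferInstance = ‹MeasurableSpace Ω›)
    (hlim : Tendsto (fun n : ℕ => shannonEntropy μ (itinerary T ξ n) / n) atTop (𝓝 h))
    {F : Ω → α} (hF : Measurable F) :
    atTop.liminf (fun n : ℕ => ENNReal.ofReal (shannonEntropy μ (itinerary T F n) / n)) ≤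
      ENNReal.ofReal h := by
  have hbound (k : ℕ) :
      atTop.liminf (fun n : ℕ => ENNReal.ofReal (shannonEntropy μ (itinerary T F n) / n)) ≤
        ENNReal.ofReal (h + condEntropy μ F (itinerary T ξ k)) := by
    have hlim' : Tendsto (fun n : ℕ => ENNReal.ofReal
        (shannonEntropy μ (itinerary T ξ (n + k)) / n + condEntropy μ F (itinerary T ξ k)))
        atTop (𝓝 (ENNReal.ofReal (h + condEntropy μ F (itinerary T ξ k)))) :=
      ENNReal.tendsto_ofReal ((tendsto_add_nat_div hlim k).add_const _)
    rw [← hlim'.liminf_eq]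
    refine liminf_le_liminf ?_
    filter_upwards [eventually_gt_atTop 0] with n hn
    have hn' : (0 : ℝ) < n := Nat.cast_pos.2 hn
    refine ENNReal.ofReal_le_ofReal ?_
    rw [div_add' _ _ _ hn'.ne', mul_comm (condEntropy _ _ _)]
    exact div_le_div_of_nonneg_right (shannonEntropy_itinerary_le hT hF hξ n k) hn'.le
  have hcond : Tendsto (fun k => h + condEntropy μ F (itinerary T ξ k)) atTop (𝓝 h) := by
    simpa only [add_zero] using
      (tendsto_condEntropy_zero μ (monotone_comap_itinerary T ξ) hgen hF).const_add h
  exact ge_of_tendsto' (ENNReal.tendsto_ofReal hcond) hbound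

theorem ksEntropy_eq_of_generator (hT : MeasurePreserving T μ μ) (hξ : Measurable ξ)
    (hgen : ⨆ n, MeasurableSpace.comap (itinerary T ξ n) inferInstance = ‹MeasurableSpace Ω›)
    (hlim : Tendsto (fun n : ℕ => shannonEntropy μ (itinerary T ξ n) / n) atTop (𝓝 h)) :
    ksEntropy T μ = ENNReal.ofReal h := by
  refine le_antisymm (iSup_le fun P => iSup₂_le fun hP hfin => ?_) ?_
  · have : Fintype (range P) := hfin.fintype
    have hF : Measurable (rangeFactorization P) := hP.subtype_mk
    have hfactor : P = Subtype.val ∘ rangeFactorization P := rfl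
    rw [hfactor, liminf_partInfo_comp_div_eq T _ Subtype.val_injective]
    exact liminf_shannonEntropy_itinerary_div_le hT hξ hgen hlim hF
  · set v : κ → ℕ := fun c => Fintype.equivFin κ c
    have hv : Function.Injective v := Fin.val_injective.comp (Fintype.equivFin κ).injective
    calc ENNReal.ofReal h
        = atTop.liminf fun n : ℕ => partInfo T μ (v ∘ ξ) n / (n : ℝ≥0∞) := by
          rw [liminf_partInfo_comp_div_eq T ξ hv, (ENNReal.tendsto_ofReal hlim).liminf_eq]
      _ ≤ ksEntropy T μ :=
          le_iSup_of_le (v ∘ ξ) <| le_iSup₂_of_le ((measurable_of_finite v).comp hξ)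
            ((finite_range v).subset (range_comp_subset_range ξ v)) le_rfl

end KolmogorovSinai

section Words

open Real (negMulLog binEntropy)

lemma sum_ofFn_cons {α M : Type*} [Fintype α] [AddCommMonoid M] (f : List α → M) (n : ℕ) :
    ∑ u : Fin (n + 1) → α, f (List.ofFn u) = ∑ w : Fin n → α, ∑ a, f (a :: List.ofFn w) := by
  rw [← (Fin.consEquiv fun _ => α).sum_comp, Fintype.sum_prod_type_right]
  exact Finset.sum_congr rfl fun w _ => Finset.sum_congr rfl fun a _ =>
    congrArg f (List.ofFn_cons a w)

lemma sum_ofFn_append_singleton {α M : Type*} [Fintype α] [AddCommMonoid M] (f : List α → M)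
    (n : ℕ) :
    ∑ u : Fin (n + 1) → α, f (List.ofFn u) = ∑ w : Fin n → α, ∑ a, f (List.ofFn w ++ [a]) := by
  rw [← (Fin.snocEquiv fun _ => α).sum_comp, Fintype.sum_prod_type_right]
  simp only [Fin.snocEquiv_apply, List.ofFn_succ', Fin.snoc_castSucc, Fin.snoc_last,
    List.concat_eq_append]

lemma negMulLog_add_negMulLog (x y : ℝ) :
    negMulLog x + negMulLog y = negMulLog (x + y) + (x + y) * binEntropy (x / (x + y)) := by
  rcases eq_or_ne (x + y) 0 with hsum | hsum
  · rw [hsum, eq_neg_of_add_eq_zero_right hsum]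
    simp only [Real.negMulLog, Real.log_neg_eq_log, zero_mul, neg_neg, neg_zero, add_zero]
    ring
  · have hx : x = (x + y) * (x / (x + y)) := (mul_div_cancel₀ x hsum).symm
    have hy : y = (x + y) * (1 - x / (x + y)) := by rw [mul_sub, ← hx]; ring
    rw [Real.binEntropy_eq_negMulLog_add_negMulLog_one_sub]
    nth_rw 1 [hx]
    nth_rw 3 [hy]
    rw [Real.negMulLog_mul, Real.negMulLog_mul]
    ring

lemma shift_iterate_apply (j : ℕ) (x : ℕ → Bool) (i : ℕ) : shift^[j] x i = x (i + j) := by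
  induction j generalizing x with
  | zero => rfl
  | succ j ih => rw [Function.iterate_succ_apply, ih]; rfl

lemma itinerary_shift_eval_zero (n : ℕ) :
    itinerary shift (Function.eval 0) n = fun x j => x j := by
  funext x j
  rw [itinerary, Function.eval, shift_iterate_apply, zero_add]

lemma iSup_comap_itinerary_shift :
    ⨆ n, MeasurableSpace.comap (itinerary shift (Function.eval 0) n) inferInstance =
      MeasurableSpace.pi := by
  simp only [itinerary_shift_eval_zero]
  refine le_antisymm (iSup_le fun n => ?_) (iSup_le fun i => le_iSup_of_le (i + 1) ?_)
  · exact (measurable_pi_lambda _ fun j : Fin n => measurable_pi_apply (j : ℕ)).comap_le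
  · have hlast : (fun x : ℕ → Bool => x i) =
        (fun w => w (Fin.last i)) ∘ fun x (j : Fin (i + 1)) => x j := rfl
    rw [hlast, ← MeasurableSpace.comap_comp]
    exact MeasurableSpace.comap_mono (measurable_pi_apply (Fin.last i)).comap_le

lemma mem_cyl {w : List Bool} {x : ℕ → Bool} :
    x ∈ cyl w ↔ ∀ i (h : i < w.length), x i = w[i] :=
  Fin.forall_iff

lemma cyl_nil : cyl [] = univ :=
  eq_univ_of_forall fun _ => mem_cyl.2 fun _ h => absurd h (Nat.not_lt_zero _)

lemma cyl_cons (e : Bool) (w : List Bool) :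
    cyl (e :: w) = shift ⁻¹' cyl w ∩ Function.eval 0 ⁻¹' {e} := by
  ext x
  simp only [mem_inter_iff, mem_preimage, mem_singleton_iff, mem_cyl, shift]
  refine ⟨fun h => ⟨fun i hi => h (i + 1) (Nat.succ_lt_succ hi), h 0 (Nat.succ_pos _)⟩, ?_⟩
  rintro ⟨htail, hhead⟩ (_ | i) hi
  exacts [hhead, htail i (Nat.lt_of_succ_lt_succ hi)]

lemma cyl_append_singleton (w : List Bool) (e : Bool) :
    cyl (w ++ [e]) = cyl w ∩ Function.eval w.length ⁻¹' {e} := by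
  ext x
  simp only [mem_inter_iff, mem_preimage, mem_singleton_iff, mem_cyl, List.length_append,
    List.length_singleton, Nat.lt_succ_iff_lt_or_eq]
  grind

lemma measurableSet_cyl (w : List Bool) : MeasurableSet (cyl w) := by
  have hcyl : cyl w = ⋂ i : Fin w.length, (fun x => x i) ⁻¹' {w.get i} := by
    ext x
    simp only [cyl, mem_ofPred_eq, mem_iInter, mem_preimage, mem_singleton_iff]
  rw [hcyl]
  exact .iInter fun i => measurable_pi_apply _ (measurableSet_singleton _)

lemma itinerary_shift_preimage_singleton {n : ℕ} (w : Fin n → Bool) :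
    itinerary shift (Function.eval 0) n ⁻¹' {w} = cyl (List.ofFn w) := by
  ext x
  rw [itinerary_shift_eval_zero, mem_preimage, mem_singleton_iff, funext_iff, Fin.forall_iff,
    mem_cyl]
  simp only [List.length_ofFn, List.getElem_ofFn]

variable (μ : Measure (ℕ → Bool))

lemma shannonEntropy_itinerary_shift (n : ℕ) :
    shannonEntropy μ (itinerary shift (Function.eval 0) n) =
      ∑ w : Fin n → Bool, negMulLog (μ.real (cyl (List.ofFn w))) := by
  simp only [shannonEntropy, itinerary_shift_preimage_singleton]

/-- The contribution of the word `w` to the conditional entropy of a letter given the letters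
that follow it, namely `μ([w])` times the entropy of the letter preceding `w`. -/
noncomputable def prependEntropy (w : List Bool) : ℝ :=
  μ.real (cyl w) * binEntropy (μ.real (cyl (true :: w)) / μ.real (cyl w))

/-- The probability of the cylinder `[0ⁿ]`. -/
noncomputable def zeroBlockProb (n : ℕ) : ℝ := μ.real (cyl (List.replicate n false))

lemma prependEntropy_le (w : List Bool) : prependEntropy μ w ≤ μ.real (cyl w) * Real.log 2 :=
  mul_le_mul_of_nonneg_left Real.binEntropy_le_log_two measureReal_nonneg

lemma zeroBlockProb_zero [IsProbabilityMeasure μ] : zeroBlockProb μ 0 = 1 := by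
  rw [zeroBlockProb, List.replicate_zero, cyl_nil, probReal_univ]

variable [IsFiniteMeasure μ]

lemma measureReal_cyl_append_true_add_false (w : List Bool) :
    μ.real (cyl (w ++ [true])) + μ.real (cyl (w ++ [false])) = μ.real (cyl w) := by
  simpa only [Fintype.sum_bool, ← cyl_append_singleton] using
    sum_measureReal_inter_preimage_univ μ (measurable_pi_apply w.length) (cyl w)

lemma sum_measureReal_cyl_ofFn (n : ℕ) :
    ∑ w : Fin n → Bool, μ.real (cyl (List.ofFn w)) = μ.real univ := by
  induction n with
  | zero => rw [Fintype.sum_unique, List.ofFn_zero, cyl_nil]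
  | succ n ih =>
    rw [sum_ofFn_append_singleton (fun u => μ.real (cyl u)), ← ih]
    simp only [Fintype.sum_bool, measureReal_cyl_append_true_add_false]

lemma measureReal_cyl_replicate_append_true (n : ℕ) :
    μ.real (cyl (List.replicate n false ++ [true])) =
      zeroBlockProb μ n - zeroBlockProb μ (n + 1) := by
  rw [zeroBlockProb, zeroBlockProb, List.replicate_succ', eq_sub_iff_add_eq]
  exact measureReal_cyl_append_true_add_false μ _

lemma exists_tendsto_zeroBlockProb : ∃ l, Tendsto (zeroBlockProb μ) atTop (𝓝 l) := by
  have hanti : Antitone (zeroBlockProb μ) := antitone_nat_of_succ_le fun n =>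
    sub_nonneg.1 (measureReal_cyl_replicate_append_true μ n ▸ measureReal_nonneg)
  exact ⟨_, tendsto_atTop_ciInf hanti ⟨0, forall_mem_range.2 fun _ => measureReal_nonneg⟩⟩

lemma tendsto_negMulLog_zeroBlockProb_sub_succ :
    Tendsto (fun n => negMulLog (zeroBlockProb μ n - zeroBlockProb μ (n + 1))) atTop (𝓝 0) := by
  obtain ⟨l, hl⟩ := exists_tendsto_zeroBlockProb μ
  have hgap := hl.sub (hl.comp (tendsto_add_atTop_nat 1))
  rw [sub_self] at hgap
  exact Real.negMulLog_zero ▸ (Real.continuous_negMulLog.tendsto 0).comp hgap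

section Markov

variable {μ} (hmarkov : markovRel μ)
include hmarkov

lemma prependEntropy_append_singleton {w : List Bool} (hw : w ≠ List.replicate w.length false)
    (e : Bool) : prependEntropy μ (w ++ [e]) =
      μ.real (cyl (w ++ [e])) * binEntropy (μ.real (cyl (true :: w)) / μ.real (cyl w)) := by
  rcases eq_or_ne (μ.real (cyl (w ++ [e]))) 0 with hzero | hne
  · rw [prependEntropy, hzero, zero_mul, zero_mul]
  · have hne' : μ.real (cyl w) ≠ 0 := fun h => hne <|
      measureReal_mono_null (cyl_append_singleton w e ▸ inter_subset_left) h
    have hratio : μ.real (cyl (true :: (w ++ [e]))) / μ.real (cyl (w ++ [e])) =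
        μ.real (cyl (true :: w)) / μ.real (cyl w) :=
      (div_eq_div_iff hne hne').2 (hmarkov w hw true e)
    rw [prependEntropy, hratio]

lemma sum_prependEntropy_append_singleton {w : List Bool}
    (hw : w ≠ List.replicate w.length false) :
    ∑ e, prependEntropy μ (w ++ [e]) = prependEntropy μ w := by
  rw [Fintype.sum_bool, prependEntropy_append_singleton hmarkov hw,
    prependEntropy_append_singleton hmarkov hw, ← add_mul, measureReal_cyl_append_true_add_false,
    prependEntropy]

lemma sum_prependEntropy_ofFn (n : ℕ) :
    ∑ w : Fin n → Bool, prependEntropy μ (List.ofFn w) =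
      prependEntropy μ (List.replicate n false) +
        ∑ k ∈ Finset.range n, prependEntropy μ (List.replicate k false ++ [true]) := by
  induction n with
  | zero => simp
  | succ n ih =>
    have hstep : ∑ w : Fin n → Bool, (∑ e, prependEntropy μ (List.ofFn w ++ [e]) -
        prependEntropy μ (List.ofFn w)) = prependEntropy μ (List.replicate n false ++ [true]) +
          prependEntropy μ (List.replicate n false ++ [false]) -
          prependEntropy μ (List.replicate n false) := by
      rw [Fintype.sum_eq_single (fun _ => false), List.ofFn_const, Fintype.sum_bool]
      intro w hw
      refine sub_eq_zero.2 (sum_prependEntropy_append_singleton hmarkov fun h => hw ?_)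
      rw [List.length_ofFn, ← List.ofFn_const] at h
      exact List.ofFn_injective h
    rw [Finset.sum_sub_distrib, ← sum_ofFn_append_singleton, ih, ← List.replicate_succ'] at hstep
    rw [Finset.sum_range_succ]
    linarith

end Markov

section Invariant

variable {μ} (hinv : MeasurePreserving shift μ μ)
include hinv

lemma measureReal_cyl_cons_true_add_false (w : List Bool) :
    μ.real (cyl (true :: w)) + μ.real (cyl (false :: w)) = μ.real (cyl w) := by
  rw [← hinv.measureReal_preimage (measurableSet_cyl w).nullMeasurableSet]
  simpa only [Fintype.sum_bool, ← cyl_cons] using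
    sum_measureReal_inter_preimage_univ μ (measurable_pi_apply 0) (shift ⁻¹' cyl w)

lemma prependEntropy_nonneg (w : List Bool) : 0 ≤ prependEntropy μ w := by
  have hle : μ.real (cyl (true :: w)) ≤ μ.real (cyl w) := by
    rw [← measureReal_cyl_cons_true_add_false hinv w]
    exact le_add_of_nonneg_right measureReal_nonneg
  exact mul_nonneg measureReal_nonneg <| Real.binEntropy_nonneg
    (div_nonneg measureReal_nonneg measureReal_nonneg) (div_le_one_of_le₀ hle measureReal_nonneg)

lemma prependEntropy_eq_negMulLog (w : List Bool) : prependEntropy μ w =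
    negMulLog (μ.real (cyl (true :: w))) + negMulLog (μ.real (cyl (false :: w))) -
      negMulLog (μ.real (cyl w)) := by
  rw [negMulLog_add_negMulLog, measureReal_cyl_cons_true_add_false hinv, add_sub_cancel_left,
    prependEntropy]

lemma shannonEntropy_itinerary_shift_succ_sub (n : ℕ) :
    shannonEntropy μ (itinerary shift (Function.eval 0) (n + 1)) -
        shannonEntropy μ (itinerary shift (Function.eval 0) n) =
      ∑ w : Fin n → Bool, prependEntropy μ (List.ofFn w) := by
  simp only [shannonEntropy_itinerary_shift, sum_ofFn_cons (fun u => negMulLog (μ.real (cyl u))),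
    Fintype.sum_bool, prependEntropy_eq_negMulLog hinv, Finset.sum_sub_distrib]

lemma measureReal_cyl_true_cons_replicate (n : ℕ) :
    μ.real (cyl (true :: List.replicate n false)) =
      zeroBlockProb μ n - zeroBlockProb μ (n + 1) := by
  rw [zeroBlockProb, zeroBlockProb, List.replicate_succ, eq_sub_iff_add_eq]
  exact measureReal_cyl_cons_true_add_false hinv _

lemma measureReal_cyl_true_cons_replicate_append_true (n : ℕ) :
    μ.real (cyl (true :: (List.replicate n false ++ [true]))) =
      zeroBlockProb μ n - 2 * zeroBlockProb μ (n + 1) + zeroBlockProb μ (n + 2) := by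
  have hsplit := measureReal_cyl_append_true_add_false μ (true :: List.replicate n false)
  rw [List.cons_append, List.cons_append, ← List.replicate_succ',
    measureReal_cyl_true_cons_replicate hinv, measureReal_cyl_true_cons_replicate hinv] at hsplit
  linarith

lemma prependEntropy_replicate (n : ℕ) : prependEntropy μ (List.replicate n false) =
    negMulLog (zeroBlockProb μ n - zeroBlockProb μ (n + 1)) +
      negMulLog (zeroBlockProb μ (n + 1)) - negMulLog (zeroBlockProb μ n) := by
  rw [prependEntropy_eq_negMulLog hinv, measureReal_cyl_true_cons_replicate hinv,
    ← List.replicate_succ, zeroBlockProb, zeroBlockProb]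

lemma prependEntropy_replicate_append_true (n : ℕ) :
    prependEntropy μ (List.replicate n false ++ [true]) = negMulLog
        (zeroBlockProb μ n - 2 * zeroBlockProb μ (n + 1) + zeroBlockProb μ (n + 2)) +
      (negMulLog (zeroBlockProb μ (n + 1) - zeroBlockProb μ (n + 2)) -
        negMulLog (zeroBlockProb μ n - zeroBlockProb μ (n + 1))) := by
  rw [prependEntropy_eq_negMulLog hinv, measureReal_cyl_true_cons_replicate_append_true hinv,
    ← List.cons_append, ← List.replicate_succ, measureReal_cyl_replicate_append_true,
    measureReal_cyl_replicate_append_true, add_sub_assoc]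

lemma sum_prependEntropy_replicate_append_true (n : ℕ) :
    ∑ k ∈ Finset.range n, prependEntropy μ (List.replicate k false ++ [true]) =
      ∑ k ∈ Finset.range n, negMulLog
          (zeroBlockProb μ k - 2 * zeroBlockProb μ (k + 1) + zeroBlockProb μ (k + 2)) +
        (negMulLog (zeroBlockProb μ n - zeroBlockProb μ (n + 1)) -
          negMulLog (zeroBlockProb μ 0 - zeroBlockProb μ 1)) := by
  simp only [prependEntropy_replicate_append_true hinv, Finset.sum_add_distrib]
  rw [Finset.sum_range_sub fun k => negMulLog (zeroBlockProb μ k - zeroBlockProb μ (k + 1))]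

lemma tendsto_prependEntropy_replicate :
    Tendsto (fun n => prependEntropy μ (List.replicate n false)) atTop (𝓝 0) := by
  obtain ⟨l, hl⟩ := exists_tendsto_zeroBlockProb μ
  have hentropy := (Real.continuous_negMulLog.tendsto l).comp hl
  have hlim := ((tendsto_negMulLog_zeroBlockProb_sub_succ μ).add
    (hentropy.comp (tendsto_add_atTop_nat 1))).sub hentropy
  rw [zero_add, sub_self] at hlim
  exact hlim.congr fun n => (prependEntropy_replicate hinv n).symm

end Invariant

section MarkovInvariant

variable {μ : Measure (ℕ → Bool)} [IsProbabilityMeasure μ] (hinv : MeasurePreserving shift μ μ)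
  (hmarkov : markovRel μ)
include hinv hmarkov

lemma sum_prependEntropy_replicate_append_true_le (n : ℕ) :
    ∑ k ∈ Finset.range n, prependEntropy μ (List.replicate k false ++ [true]) ≤ Real.log 2 :=
  calc ∑ k ∈ Finset.range n, prependEntropy μ (List.replicate k false ++ [true])
      ≤ ∑ w : Fin n → Bool, prependEntropy μ (List.ofFn w) := by
        rw [sum_prependEntropy_ofFn hmarkov]
        exact le_add_of_nonneg_left (prependEntropy_nonneg hinv _)
    _ ≤ ∑ w : Fin n → Bool, μ.real (cyl (List.ofFn w)) * Real.log 2 :=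
        Finset.sum_le_sum fun w _ => prependEntropy_le μ _
    _ = Real.log 2 := by
        rw [← Finset.sum_mul, sum_measureReal_cyl_ofFn, probReal_univ, one_mul]

lemma summable_negMulLog_zeroBlockProb_secondDiff : Summable fun k => negMulLog
    (zeroBlockProb μ k - 2 * zeroBlockProb μ (k + 1) + zeroBlockProb μ (k + 2)) := by
  refine summable_of_sum_range_le
    (c := Real.log 2 + negMulLog (zeroBlockProb μ 0 - zeroBlockProb μ 1))
    (fun k => ?_) fun n => ?_
  · rw [← measureReal_cyl_true_cons_replicate_append_true hinv]
    exact Real.negMulLog_nonneg measureReal_nonneg measureReal_le_one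
  · have hsum := sum_prependEntropy_replicate_append_true_le hinv hmarkov n
    have hnonneg : 0 ≤ negMulLog (zeroBlockProb μ n - zeroBlockProb μ (n + 1)) := by
      rw [← measureReal_cyl_replicate_append_true]
      exact Real.negMulLog_nonneg measureReal_nonneg measureReal_le_one
    rw [sum_prependEntropy_replicate_append_true hinv] at hsum
    linarith

lemma tendsto_sum_prependEntropy_ofFn :
    Tendsto (fun n => ∑ w : Fin n → Bool, prependEntropy μ (List.ofFn w)) atTop
      (𝓝 (-negMulLog (1 - zeroBlockProb μ 1) + ∑' k, negMulLog
        (zeroBlockProb μ k - 2 * zeroBlockProb μ (k + 1) + zeroBlockProb μ (k + 2)))) := by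
  have hlim := (tendsto_prependEntropy_replicate hinv).add <|
    (summable_negMulLog_zeroBlockProb_secondDiff hinv hmarkov).tendsto_sum_tsum_nat.add <|
      (tendsto_negMulLog_zeroBlockProb_sub_succ μ).sub_const
        (negMulLog (zeroBlockProb μ 0 - zeroBlockProb μ 1))
  rw [zero_add, zero_sub, add_comm, zeroBlockProb_zero] at hlim
  refine hlim.congr fun n => ?_
  rw [sum_prependEntropy_ofFn hmarkov, sum_prependEntropy_replicate_append_true hinv,
    zeroBlockProb_zero]

lemma tendsto_shannonEntropy_itinerary_shift_div :
    Tendsto (fun n : ℕ => shannonEntropy μ (itinerary shift (Function.eval 0) n) / n) atTop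
      (𝓝 (-negMulLog (1 - zeroBlockProb μ 1) + ∑' k, negMulLog
        (zeroBlockProb μ k - 2 * zeroBlockProb μ (k + 1) + zeroBlockProb μ (k + 2)))) :=
  tendsto_div_of_tendsto_succ_sub <| (tendsto_sum_prependEntropy_ofFn hinv hmarkov).congr fun n =>
    (shannonEntropy_itinerary_shift_succ_sub hinv n).symm

end MarkovInvariant

end Words

/-- **Lemma 5.7.** Under the conditions `1 = a_0 ≥ a_1 ≥ ⋯`,
`a_i - 2a_{i+1} + a_{i+2} ≥ 0`, the maximal entropy measure `μ` (characterized by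
`μ([0^n]) = a_n`, the relations of Lemma 5.4, and the recursion relations) has entropy
`h_μ = -h(1-a_1) + Σ_{j≥0} h(a_j - 2a_{j+1} + a_{j+2})` where `h(x) = -x log x`. -/
theorem entropy_of_maximal_entropy_measure (a : ℕ → ℝ) (ha0 : a 0 = 1)
    (hpos : ∀ n, 0 ≤ a n) (hmono : ∀ i : ℕ, a (i + 1) ≤ a i)
    (hconv : ∀ i : ℕ, 0 ≤ a i - 2 * a (i + 1) + a (i + 2))
    (μ : Measure (ℕ → Bool)) (hprob : IsProbabilityMeasure μ)
    (hinv : MeasurePreserving shift μ μ)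
    (hcylzero : ∀ n : ℕ, 1 ≤ n → (μ (cyl (List.replicate n false))).toReal = a n)
    (hcyl : cylRel a μ) (hmarkov : markovRel μ) :
    ksEntropy shift μ =
      ENNReal.ofReal (-(Real.negMulLog (1 - a 1)) +
        ∑' j : ℕ, Real.negMulLog (a j - 2 * a (j + 1) + a (j + 2))) := by
  have hzero : zeroBlockProb μ = a := by
    funext n
    rcases n.eq_zero_or_pos with rfl | hn
    · rw [zeroBlockProb_zero, ha0]
    · exact hcylzero n hn
  rw [← hzero]
  exact ksEntropy_eq_of_generator hinv (measurable_pi_apply 0) iSup_comap_itinerary_shift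
    (tendsto_shannonEntropy_itinerary_shift_div hinv hmarkov)
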